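/- For every a ∈ ℕ and every n ∈ ℕ, the polynomials P_n(X) = ∑_{k=0}^{n} ((ak)!/k!) X^k and P_{n+1}(X) = ∑_{k=0}^{n+1} ((ak)!/k!) X^k have no common zero in ℂ. -/

import Mathlib

open Polynomial

/-- `P n = ∑_{k=0}^{n} ((a·k)!/k!) Xᵏ ∈ ℂ[X]` (depending on a parameter `a ∈ ℕ`). -/
noncomputable def P (a n : ℕ) : Polynomial ℂ :=
  ∑ k ∈ Finset.range (n + 1), C (((a * k).factorial : ℂ) / (k.factorial : ℂ)) * X ^ k

theorem stmt_17 (a n : ℕ) :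
    ¬ ∃ x : ℂ, (P a n).eval x = 0 ∧ (P a (n + 1)).eval x = 0 := by
  rintro ⟨x, h0, h1⟩
  have hs : P a (n + 1) = P a n +
      C (((a * (n + 1)).factorial : ℂ) / ((n + 1).factorial : ℂ)) * X ^ (n + 1) := by
    unfold P
    rw [Finset.sum_range_succ]
  rw [hs, eval_add, h0, zero_add, eval_mul, eval_C, eval_pow, eval_X] at h1
  have hc : ((a * (n + 1)).factorial : ℂ) / ((n + 1).factorial : ℂ) ≠ 0 :=
    div_ne_zero (by exact_mod_cast Nat.factorial_ne_zero _)
      (by exact_mod_cast Nat.factorial_ne_zero _)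
  have hx : x = 0 := by
    rcases mul_eq_zero.mp h1 with h | h
    · exact absurd h hc
    · exact pow_eq_zero_iff (Nat.succ_ne_zero n) |>.mp h
  subst hx
  unfold P at h0
  rw [eval_finset_sum, Finset.sum_range_succ'] at h0
  simp at h0
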